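/- Consider a finite-horizon MDP in which the optimal action is unique at every state (|argmax_a Q*_h(s,a)| = 1 for all s, h), with unique optimal policy π* given by π*_h(s) = argmax_a Q*_h(s,a), and whose minimum positive gap Δ_min = min{Δ_h(s,a) : Δ_h(s,a) > 0} is well defined (some gap is positive). Then for every deterministic policy π and every h ∈ {1,…,H}, the probability (over trajectories with s₁ ∼ μ and actions a_j = π_j(s_j)) that the policy deviates from π* within the first h steps satisfies P_π( ∃ j ∈ {1,…,h} : a_j ≠ π*_j(s_j) ) ≤ (1/Δ_min) · E_{s₁∼μ}[ V*_1(s₁) − V^π_1(s₁) ]. -/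

import Mathlib

/-!
STATEMENT 5: in an MDP with a unique optimal policy `π*` and well-defined
minimum positive gap `Δ_min`, for every policy `π` and every `h ∈ [1,H]`,
`P_π(∃ j ∈ [1,h] : a_j ≠ π*_j(s_j)) ≤ (1/Δ_min) E_{s₁∼μ}[V*_1(s₁) − V^π_1(s₁)]`.
-/

open Finset

variable {S A : Type*}

section MDP
variable [Fintype S] [Fintype A] [Nonempty A]

noncomputable def VstarAux (r : ℕ → S → A → ℝ) (p : ℕ → S → A → S → ℝ) :
    ℕ → ℕ → S → ℝ
  | 0, _, _ => 0
  | t + 1, h, s =>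
      Finset.univ.sup' Finset.univ_nonempty fun a : A =>
        r h s a + ∑ s' : S, p h s a s' * VstarAux r p t (h + 1) s'

noncomputable def Vstar (H : ℕ) (r : ℕ → S → A → ℝ) (p : ℕ → S → A → S → ℝ)
    (h : ℕ) (s : S) : ℝ :=
  VstarAux r p (H + 1 - h) h s

noncomputable def Qstar (H : ℕ) (r : ℕ → S → A → ℝ) (p : ℕ → S → A → S → ℝ)
    (h : ℕ) (s : S) (a : A) : ℝ :=
  r h s a + ∑ s' : S, p h s a s' * Vstar H r p (h + 1) s'

/-- Suboptimality gap `Δ_h(s,a) = V*_h(s) − Q*_h(s,a)`. -/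
noncomputable def gap (H : ℕ) (r : ℕ → S → A → ℝ) (p : ℕ → S → A → S → ℝ)
    (h : ℕ) (s : S) (a : A) : ℝ :=
  Vstar H r p h s - Qstar H r p h s a

noncomputable def VpiAux (r : ℕ → S → A → ℝ) (p : ℕ → S → A → S → ℝ)
    (π : ℕ → S → A) : ℕ → ℕ → S → ℝ
  | 0, _, _ => 0
  | t + 1, h, s =>
      r h s (π h s) + ∑ s' : S, p h s (π h s) s' * VpiAux r p π t (h + 1) s'

noncomputable def Vpi (H : ℕ) (r : ℕ → S → A → ℝ) (p : ℕ → S → A → S → ℝ)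
    (π : ℕ → S → A) (h : ℕ) (s : S) : ℝ :=
  VpiAux r p π (H + 1 - h) h s

/-- `devAux p π πstar t j s` is the probability, starting from `s_j = s` and
following `π`, that the action taken at some stage `i ∈ [j, j + t - 1]` differs
from `π*_i(s_i)`.  (Once a deviation occurs, it has occurred; otherwise the
trajectory continues one step.) -/
noncomputable def devAux [DecidableEq A] (p : ℕ → S → A → S → ℝ)
    (π πstar : ℕ → S → A) : ℕ → ℕ → S → ℝ
  | 0, _, _ => 0
  | t + 1, j, s =>
      if π j s ≠ πstar j s then 1
      else ∑ s' : S, p j s (π j s) s' * devAux p π πstar t (j + 1) s'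

end MDP

/-!
The loss `V* - V^π` at a stage is the gap of the action `π` plays there plus the expected loss at
the next stage. All gaps are nonnegative, and the first deviation from `π*` contributes a gap of at
least `Δ_min`; so the loss is at least `Δ_min` times the probability that a deviation occurs.
-/

theorem mul_sum_mul_le_sum_mul {ι R : Type*} [CommSemiring R] [PartialOrder R] [IsOrderedRing R]
    {s : Finset ι} {c : R} {w f g : ι → R} (hw : ∀ i ∈ s, 0 ≤ w i)
    (hfg : ∀ i ∈ s, c * f i ≤ g i) :
    c * ∑ i ∈ s, w i * f i ≤ ∑ i ∈ s, w i * g i := by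
  simp only [Finset.mul_sum, mul_left_comm c]
  exact Finset.sum_le_sum fun i hi => mul_le_mul_of_nonneg_left (hfg i hi) (hw i hi)

section MDP
variable [Fintype S] {H h : ℕ} {r : ℕ → S → A → ℝ} {p : ℕ → S → A → S → ℝ} {π : ℕ → S → A}

theorem Vpi_eq_add_sum (hh : h ≤ H) (s : S) :
    Vpi H r p π h s =
      r h s (π h s) + ∑ s' : S, p h s (π h s) s' * Vpi H r p π (h + 1) s' := by
  simp only [Vpi, Nat.succ_sub hh, VpiAux, Nat.add_sub_add_right]

variable [Fintype A] [Nonempty A]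

theorem Vstar_eq_sup'_Qstar (hh : h ≤ H) (s : S) :
    Vstar H r p h s = Finset.univ.sup' Finset.univ_nonempty fun a => Qstar H r p h s a := by
  simp only [Vstar, Nat.succ_sub hh, VstarAux, Qstar, Nat.add_sub_add_right]

theorem Qstar_le_Vstar (hh : h ≤ H) (s : S) (a : A) : Qstar H r p h s a ≤ Vstar H r p h s := by
  rw [Vstar_eq_sup'_Qstar hh]
  exact Finset.le_sup' _ (Finset.mem_univ a)

theorem gap_nonneg (hh : h ≤ H) (s : S) (a : A) : 0 ≤ gap H r p h s a :=
  sub_nonneg.2 (Qstar_le_Vstar hh s a)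

theorem gap_pos_of_Qstar_lt (hh : h ≤ H) {s : S} {a b : A}
    (hab : Qstar H r p h s a < Qstar H r p h s b) : 0 < gap H r p h s a :=
  sub_pos.2 (hab.trans_le (Qstar_le_Vstar hh s b))

theorem Vstar_sub_Vpi_eq_gap_add_sum (hh : h ≤ H) (s : S) :
    Vstar H r p h s - Vpi H r p π h s =
      gap H r p h s (π h s) +
        ∑ s' : S, p h s (π h s) s' * (Vstar H r p (h + 1) s' - Vpi H r p π (h + 1) s') := by
  simp only [Vpi_eq_add_sum hh, gap, Qstar, mul_sub, Finset.sum_sub_distrib]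
  ring

theorem Vpi_le_Vstar (hp0 : ∀ h s a s', 0 ≤ p h s a s') (h : ℕ) (s : S) :
    Vpi H r p π h s ≤ Vstar H r p h s := by
  induction hn : H + 1 - h generalizing h s with
  | zero => simp only [Vpi, Vstar, hn, VpiAux, VstarAux, le_refl]
  | succ n ih =>
    have hh : h ≤ H := by omega
    rw [← sub_nonneg, Vstar_sub_Vpi_eq_gap_add_sum hh]
    exact add_nonneg (gap_nonneg hh s _) <| Finset.sum_nonneg fun s' _ =>
      mul_nonneg (hp0 _ _ _ _) (sub_nonneg.2 (ih (h + 1) s' (by omega)))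

theorem gap_le_Vstar_sub_Vpi (hp0 : ∀ h s a s', 0 ≤ p h s a s') (hh : h ≤ H) (s : S) :
    gap H r p h s (π h s) ≤ Vstar H r p h s - Vpi H r p π h s := by
  rw [Vstar_sub_Vpi_eq_gap_add_sum hh]
  exact le_add_of_nonneg_right <| Finset.sum_nonneg fun s' _ =>
    mul_nonneg (hp0 _ _ _ _) (sub_nonneg.2 (Vpi_le_Vstar hp0 _ s'))

theorem mul_devAux_le_Vstar_sub_Vpi [DecidableEq A] (hp0 : ∀ h s a s', 0 ≤ p h s a s')
    {πstar : ℕ → S → A} {δ : ℝ} {t j : ℕ} (htj : j + t ≤ H + 1)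
    (hδ : ∀ i, j ≤ i → i ≤ H → ∀ s a, a ≠ πstar i s → δ ≤ gap H r p i s a) (s : S) :
    δ * devAux p π πstar t j s ≤ Vstar H r p j s - Vpi H r p π j s := by
  induction t generalizing j s with
  | zero => simpa only [devAux, mul_zero, sub_nonneg] using Vpi_le_Vstar hp0 j s
  | succ t ih =>
    have hj : j ≤ H := by omega
    rw [devAux]
    split_ifs with hdev
    · rw [mul_one]
      exact (hδ j le_rfl hj s _ hdev).trans (gap_le_Vstar_sub_Vpi hp0 hj s)
    · have ih_next (s' : S) : δ * devAux p π πstar t (j + 1) s' ≤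
          Vstar H r p (j + 1) s' - Vpi H r p π (j + 1) s' :=
        ih (by omega) (fun i hi => hδ i (Nat.le_of_succ_le hi)) s'
      rw [Vstar_sub_Vpi_eq_gap_add_sum hj]
      exact le_add_of_nonneg_of_le (gap_nonneg hj s _) <|
        mul_sum_mul_le_sum_mul (fun s' _ => hp0 _ _ _ s') fun s' _ => ih_next s'

end MDP

theorem stmt5
    {S A : Type*} [Fintype S] [Fintype A] [Nonempty A] [DecidableEq A]
    (H : ℕ) (hH : 1 ≤ H)
    (r : ℕ → S → A → ℝ) (p : ℕ → S → A → S → ℝ)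
    (hp0 : ∀ h s a s', 0 ≤ p h s a s') (hp1 : ∀ h s a, ∑ s' : S, p h s a s' = 1)
    (μ : S → ℝ) (hμ0 : ∀ s, 0 ≤ μ s) (hμ1 : ∑ s : S, μ s = 1)
    -- π* is the unique optimal policy: at every state the optimal action is
    -- unique and given by π*
    (πstar : ℕ → S → A)
    (hunique : ∀ h, 1 ≤ h → h ≤ H → ∀ s a, a ≠ πstar h s →
        Qstar H r p h s a < Qstar H r p h s (πstar h s))
    -- Δ_min is the minimum positive gap (well defined: the set of positive
    -- gaps is nonempty and Δ_min is its least element, hence attained)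
    (Δmin : ℝ)
    (hΔmin : IsLeast
        {x : ℝ | 0 < x ∧ ∃ h ∈ Finset.Icc 1 H, ∃ s : S, ∃ a : A,
          gap H r p h s a = x} Δmin) :
    ∀ π : ℕ → S → A, ∀ h, 1 ≤ h → h ≤ H →
      -- P_π(∃ j ∈ [1,h] : a_j ≠ π*_j(s_j)), with s₁ ∼ μ
      ∑ s : S, μ s * devAux p π πstar h 1 s
        ≤ (1 / Δmin) * ∑ s : S, μ s * (Vstar H r p 1 s - Vpi H r p π 1 s) := by
  intro π h _ hh
  have hΔ_le_gap (i : ℕ) (hi : 1 ≤ i) (hiH : i ≤ H) (s : S) (a : A) (ha : a ≠ πstar i s) :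
      Δmin ≤ gap H r p i s a :=
    hΔmin.2 ⟨gap_pos_of_Qstar_lt hiH (hunique i hi hiH s a ha),
      i, Finset.mem_Icc.2 ⟨hi, hiH⟩, s, a, rfl⟩
  have hΔ_pos : 0 < Δmin := hΔmin.1.1
  rw [one_div, le_inv_mul_iff₀ hΔ_pos]
  exact mul_sum_mul_le_sum_mul (fun s _ => hμ0 s) fun s _ =>
    mul_devAux_le_Vstar_sub_Vpi hp0 (by omega) hΔ_le_gap s
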